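/- arXiv:2005.01036 — 2 statements merged into one kernel-verified Lean document; each statement's English description precedes it below -/
import Mathlib

section
/- Assume in addition that |x·g'(x)| ≤ C₂|g(x)| for all x ≤ −3/2, for some constant C₂ > 0. Then there exists a constant d > 0, uniform in λ ≥ 1, such that for every u in the Schwartz space 𝒮(ℝ, ℂ⁴): |⟨Nu, A₋u⟩ − ⟨A₋u, Nu⟩| ≤ d·⟨Nu, u⟩. -/
noncomputable section

open MeasureTheory

abbrev V4 : Type := EuclideanSpace ℂ (Fin 4)

/-- A `4 × 4` complex matrix acting on `ℂ⁴` as a continuous linear map. -/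
def Mop (A : Matrix (Fin 4) (Fin 4) ℂ) : V4 →L[ℂ] V4 := Matrix.toEuclideanCLM (𝕜 := ℂ) A

/-- The `L²` inner product `⟨u, v⟩ = ∫ ⟨u(x), v(x)⟩ dx` (conjugate-linear in the first slot). -/
def L2inner (u v : ℝ → V4) : ℂ := ∫ x : ℝ, (inner ℂ (u x) (v x) : ℂ)

/-- The `L²` norm `‖u‖ = (∫ ‖u(x)‖² dx)^{1/2}`. -/
def L2norm (u : ℝ → V4) : ℝ := Real.sqrt (∫ x : ℝ, ‖u x‖ ^ 2)

/-- The operator `D = −i d/dx`. -/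
def Dop (u : ℝ → V4) : ℝ → V4 := fun x => (-Complex.I) • deriv u x

/-- The per-mode free Dirac Hamiltonian `H₀u = Γ¹Du + λgΓ²u + fu`. -/
def H0op (Γ1 Γ2 : Matrix (Fin 4) (Fin 4) ℂ) (g f : ℝ → ℝ) (lam : ℝ) (u : ℝ → V4) : ℝ → V4 :=
  fun x => Mop Γ1 (Dop u x) + (lam * g x) • Mop Γ2 (u x) + f x • u x

/-- The operator `Qu = −u'' + λ²g²u`. -/
def Qop (g : ℝ → ℝ) (lam : ℝ) (u : ℝ → V4) : ℝ → V4 :=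
  fun x => -(deriv (deriv u) x) + (lam ^ 2 * g x ^ 2) • u x

/-- The comparison operator `Nu = Qu + (1 + x²)u`. -/
def Nop (g : ℝ → ℝ) (lam : ℝ) (u : ℝ → V4) : ℝ → V4 :=
  fun x => Qop g lam u x + (1 + x ^ 2) • u x

/-- The coefficient `R₋(x) = j₋(x/S)² · x` of the conjugate operator at the double horizon. -/
def Rm (jm : ℝ → ℝ) (S : ℝ) (x : ℝ) : ℝ := (jm (x / S)) ^ 2 * x

/-- The conjugate operator at the double horizon, `A₋u = R₋Du − (i/2)R₋'u = ½{R₋, D}u`. -/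
def Amop (jm : ℝ → ℝ) (S : ℝ) (u : ℝ → V4) : ℝ → V4 :=
  fun x => Rm jm S x • Dop u x - ((Complex.I / 2) * ((deriv (Rm jm S) x : ℝ) : ℂ)) • u x

/-
Write `N = -d²/dx² + W` with `W = λ²g² + 1 + x²`, and let `R = R₋`. Since
`⟨Nu, A₋u⟩ - ⟨A₋u, Nu⟩ = 2i Im ⟨Nu, A₋u⟩`, only the imaginary part matters. It differs from
`∫ (½W'R|u|² - R'|u'|² - ½R'' Re⟨u, u'⟩)` by the integral of the total derivative of the flux
`½R|u'|² + ½R' Re⟨u, u'⟩ - ½WR|u|²`, which vanishes. The derivatives `R'` and `R''` are bounded,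
because `R(x)` is `x` near `-∞` and `0` near `+∞`. From `|R| ≤ M|x|` and `|Rg'| ≤ M|g|` one gets
`|W'R| ≤ 2MW` with a constant that does not see `λ`. Hence the integrand is dominated by the
energy density `|u'|² + W|u|²`, whose integral is `⟨Nu, u⟩`.
-/

open Asymptotics SchwartzMap
open Complex (I)
open RCLike (re im)
open scoped InnerProductSpace

/-- Polynomial growth of a function, with no condition on its derivatives (unlike
`Function.HasTemperateGrowth`). -/
def HasPolyGrowth {D F : Type*} [NormedAddCommGroup D] [NormedAddCommGroup F] (f : D → F) : Prop :=
  ∃ k : ℕ, f =O[⊤] fun x => (1 + ‖x‖) ^ k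

namespace HasPolyGrowth

variable {D F F' : Type*} [NormedAddCommGroup D] [NormedAddCommGroup F] [NormedAddCommGroup F']

theorem of_isBigO {f : D → F} {h : D → F'} (hh : HasPolyGrowth h) (hfh : f =O[⊤] h) :
    HasPolyGrowth f :=
  hh.imp fun _ hk => hfh.trans hk

theorem of_bound {f : D → F} {C : ℝ} (hf : ∀ x, ‖f x‖ ≤ C) : HasPolyGrowth f :=
  ⟨0, isBigO_top.2 ⟨C, fun x => by simpa using hf x⟩⟩

protected theorem one : HasPolyGrowth fun _ : D => (1 : ℝ) :=
  of_bound fun _ => le_rfl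

protected theorem id : HasPolyGrowth fun x : D => x :=
  ⟨1, isBigO_top.2 ⟨1, fun x => by
    rw [pow_one, one_mul, Real.norm_of_nonneg (by positivity)]
    linarith⟩⟩

protected theorem add {f h : D → F} (hf : HasPolyGrowth f) (hh : HasPolyGrowth h) :
    HasPolyGrowth fun x => f x + h x := by
  obtain ⟨k, hk⟩ := hf
  obtain ⟨l, hl⟩ := hh
  have weight_mono {m n : ℕ} (hmn : m ≤ n) :
      (fun x : D => (1 + ‖x‖) ^ m) =O[⊤] fun x => (1 + ‖x‖) ^ n :=
    .of_norm_le fun x => by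
      rw [Real.norm_of_nonneg (by positivity)]
      exact pow_le_pow_right₀ (by linarith [norm_nonneg x]) hmn
  exact ⟨max k l, (hk.trans (weight_mono (le_max_left k l))).add
    (hl.trans (weight_mono (le_max_right k l)))⟩

protected theorem mul {f h : D → ℝ} (hf : HasPolyGrowth f) (hh : HasPolyGrowth h) :
    HasPolyGrowth fun x => f x * h x := by
  obtain ⟨k, hk⟩ := hf
  obtain ⟨l, hl⟩ := hh
  exact ⟨k + l, by simpa only [pow_add] using hk.mul hl⟩

theorem const_mul {f : D → ℝ} (hf : HasPolyGrowth f) (c : ℝ) : HasPolyGrowth fun x => c * f x :=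
  hf.of_isBigO ((isBigO_refl f ⊤).const_mul_left c)

theorem div_const {f : D → ℝ} (hf : HasPolyGrowth f) (c : ℝ) : HasPolyGrowth fun x => f x / c := by
  simpa only [div_eq_inv_mul] using hf.const_mul c⁻¹

theorem of_norm_deriv_le [NormedSpace ℝ F] {f : ℝ → F} (hf : Differentiable ℝ f) {K : ℝ}
    (hK : ∀ x, ‖deriv f x‖ ≤ K) : HasPolyGrowth f := by
  have hsub : (fun x => f x - f 0) =O[⊤] fun x : ℝ => x :=
    isBigO_top.2 ⟨K, fun x => by
      simpa using convex_univ.norm_image_sub_le_of_norm_deriv_le (fun y _ => hf y)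
        (fun y _ => hK y) (Set.mem_univ 0) (Set.mem_univ x)⟩
  simpa using (HasPolyGrowth.id.of_isBigO hsub).add (of_bound fun _ : ℝ => le_rfl (a := ‖f 0‖))

end HasPolyGrowth

section Integrability

variable {D V E : Type*} [NormedAddCommGroup D] [NormedSpace ℝ D] [MeasurableSpace D]
  [BorelSpace D] [SecondCountableTopology D] {μ : Measure D} [μ.HasTemperateGrowth]
  [NormedAddCommGroup V] [NormedSpace ℝ V] [NormedAddCommGroup E] [InnerProductSpace ℂ E]

theorem integrable_one_add_norm_pow_mul_norm_schwartz (φ : 𝓢(D, V)) (k : ℕ) :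
    Integrable (fun x => (1 + ‖x‖) ^ k * ‖φ x‖) μ := by
  simp only [add_comm (1 : ℝ), add_pow, one_pow, mul_one, Finset.sum_mul,
    mul_right_comm _ (Nat.cast _ : ℝ)]
  exact integrable_finsetSum _ fun m _ => (φ.integrable_pow_mul μ m).mul_const _

theorem HasPolyGrowth.integrable_smul_inner {c : D → ℝ} (hc : HasPolyGrowth c)
    (hc_meas : AEStronglyMeasurable c μ) (φ ψ : 𝓢(D, E)) :
    Integrable (fun x => c x • ⟪φ x, ψ x⟫_ℂ) μ := by
  obtain ⟨k, hk⟩ := hc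
  obtain ⟨C, -, hC⟩ := ψ.decay 0 0
  have hinner : (fun x => ⟪φ x, ψ x⟫_ℂ) =O[⊤] fun x => ‖φ x‖ :=
    isBigO_top.2 ⟨C, fun x => by
      rw [norm_norm, mul_comm]
      refine (norm_inner_le_norm _ _).trans ?_
      gcongr
      simpa using hC x⟩
  exact (hk.smul hinner).integrable
    (hc_meas.smul (φ.continuous.inner ψ.continuous).aestronglyMeasurable)
    (integrable_one_add_norm_pow_mul_norm_schwartz φ k)

theorem HasPolyGrowth.integrable_mul_re_inner {c : D → ℝ} (hc : HasPolyGrowth c)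
    (hc_meas : AEStronglyMeasurable c μ) (φ ψ : 𝓢(D, E)) :
    Integrable (fun x => c x * re ⟪φ x, ψ x⟫_ℂ) μ := by
  simpa only [RCLike.smul_re] using (hc.integrable_smul_inner hc_meas φ ψ).re

theorem HasPolyGrowth.integrable_mul_norm_sq {c : D → ℝ} (hc : HasPolyGrowth c)
    (hc_meas : AEStronglyMeasurable c μ) (φ : 𝓢(D, E)) :
    Integrable (fun x => c x * ‖φ x‖ ^ 2) μ := by
  simpa only [← inner_self_eq_norm_sq (𝕜 := ℂ)] using hc.integrable_mul_re_inner hc_meas φ φ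

end Integrability

section Commutator

variable {E : Type*} [NormedAddCommGroup E] [InnerProductSpace ℂ E]

/-- The one-dimensional Schrödinger operator `u ↦ -u'' + Wu` with potential `W`. -/
def schrodingerOp (W : ℝ → ℝ) (u : ℝ → E) : ℝ → E :=
  fun x => -deriv (deriv u) x + W x • u x

/-- The symmetrized first-order operator `½{R, -i d/dx}`, written out as `-iRu' - (i/2)R'u`. -/
def symmMomentumOp (R : ℝ → ℝ) (u : ℝ → E) : ℝ → E :=
  fun x => R x • (-I • deriv u x) - (I / 2 * (deriv R x : ℝ)) • u x

theorem exists_schwartz_coe_eq_deriv (u : 𝓢(ℝ, E)) : ∃ v : 𝓢(ℝ, E), ⇑v = deriv u :=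
  ⟨derivCLM ℝ E u, funext (derivCLM_apply ℝ u)⟩

theorem hasDerivAt_re_inner {f h : ℝ → E} {f' h' : E} {x : ℝ} (hf : HasDerivAt f f' x)
    (hh : HasDerivAt h h' x) :
    HasDerivAt (fun y => re ⟪f y, h y⟫_ℂ) (re ⟪f x, h'⟫_ℂ + re ⟪f', h x⟫_ℂ) x := by
  simpa [Function.comp_def] using
    Complex.reCLM.hasFDerivAt.comp_hasDerivAt x (hf.inner ℂ hh)

theorem hasDerivAt_norm_sq {f : ℝ → E} {f' : E} {x : ℝ} (hf : HasDerivAt f f' x) :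
    HasDerivAt (fun y => ‖f y‖ ^ 2) (2 * re ⟪f x, f'⟫_ℂ) x := by
  simpa only [inner_self_eq_norm_sq, inner_re_symm f', ← two_mul] using hasDerivAt_re_inner hf hf

theorem inner_schrodinger_symmMomentum (w r r' : ℝ) (u₀ u₁ u₂ : E) :
    ⟪-u₂ + w • u₀, r • (-I • u₁) - (I / 2 * (r' : ℂ)) • u₀⟫_ℂ =
      I * (r • ⟪u₂, u₁⟫_ℂ + (r' / 2) • ⟪u₂, u₀⟫_ℂ - (w * r) • ⟪u₀, u₁⟫_ℂ
        - (w * r' / 2) • ⟪u₀, u₀⟫_ℂ) := by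
  simp only [RCLike.real_smul_eq_coe_smul (K := ℂ), inner_add_left, inner_sub_right,
    inner_neg_left, inner_smul_left, inner_smul_right, Complex.coe_algebraMap,
    Complex.conj_ofReal, inner_self_eq_norm_sq_to_K, smul_eq_mul, Complex.ofReal_div,
    Complex.ofReal_ofNat, Complex.ofReal_mul]
  ring

theorem integral_eq_integral_of_hasDerivAt_sub {F : Type*} [NormedAddCommGroup F] [NormedSpace ℝ F]
    {f h Φ : ℝ → F} (hΦ : ∀ x, HasDerivAt Φ (f x - h x) x) (hΦ_int : Integrable Φ)
    (hf : Integrable f) (hh : Integrable h) : ∫ x, f x = ∫ x, h x := by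
  rw [← sub_eq_zero, ← integral_sub hf hh]
  exact integral_eq_zero_of_hasDerivAt_of_integrable hΦ (hf.sub hh) hΦ_int

theorem integrable_norm_sq_add_mul_norm_sq {W : ℝ → ℝ} (hW : HasPolyGrowth W)
    (hW_meas : AEStronglyMeasurable W) (φ ψ : 𝓢(ℝ, E)) :
    Integrable fun x => ‖ψ x‖ ^ 2 + W x * ‖φ x‖ ^ 2 := by
  have hψ : Integrable fun x => ‖ψ x‖ ^ 2 := by
    simpa only [one_mul] using
      HasPolyGrowth.one.integrable_mul_norm_sq aestronglyMeasurable_const ψ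
  exact hψ.add (hW.integrable_mul_norm_sq hW_meas φ)

theorem re_integral_inner_schrodingerOp_self {W : ℝ → ℝ} (hW : HasPolyGrowth W)
    (hW_meas : AEStronglyMeasurable W) (u : 𝓢(ℝ, E)) :
    re (∫ x, ⟪schrodingerOp W u x, u x⟫_ℂ) = ∫ x, (‖deriv u x‖ ^ 2 + W x * ‖u x‖ ^ 2) := by
  obtain ⟨v, hv⟩ := exists_schwartz_coe_eq_deriv u
  obtain ⟨w, hw⟩ := exists_schwartz_coe_eq_deriv v
  have inner_eq (x : ℝ) : ⟪schrodingerOp W u x, u x⟫_ℂ =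
      -((1 : ℝ) • ⟪w x, u x⟫_ℂ) + W x • ⟪u x, u x⟫_ℂ := by
    simp only [schrodingerOp, ← hv, ← hw, RCLike.real_smul_eq_coe_smul (K := ℂ),
      inner_add_left, inner_neg_left, inner_smul_left, RCLike.conj_ofReal, smul_eq_mul,
      RCLike.ofReal_one, one_mul]
  have inner_int : Integrable fun x => ⟪schrodingerOp W u x, u x⟫_ℂ := by
    simp only [inner_eq]
    exact (HasPolyGrowth.one.integrable_smul_inner aestronglyMeasurable_const w u).neg.add
      (hW.integrable_smul_inner hW_meas u u)
  have flux_int : Integrable fun x => re ⟪u x, v x⟫_ℂ := by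
    simpa only [one_mul] using
      HasPolyGrowth.one.integrable_mul_re_inner aestronglyMeasurable_const u v
  rw [← integral_re inner_int, ← hv]
  refine (integral_eq_integral_of_hasDerivAt_sub (fun x => ?_) flux_int
    (integrable_norm_sq_add_mul_norm_sq hW hW_meas u v) inner_int.re).symm
  have hu' : HasDerivAt u (v x) x := hv ▸ u.differentiableAt.hasDerivAt
  have hv' : HasDerivAt v (w x) x := hw ▸ v.differentiableAt.hasDerivAt
  refine (hasDerivAt_re_inner hu' hv').congr_deriv ?_
  rw [inner_eq, one_smul, map_add, map_neg, RCLike.smul_re, inner_re_symm (w x),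
    inner_self_eq_norm_sq, inner_self_eq_norm_sq]
  ring

theorem hasDerivAt_commutator_flux {R R' W : ℝ → ℝ} {u v : ℝ → E} {r'' w' : ℝ} {w : E} {x : ℝ}
    (hR : HasDerivAt R (R' x) x) (hR' : HasDerivAt R' r'' x) (hW : HasDerivAt W w' x)
    (hu : HasDerivAt u (v x) x) (hv : HasDerivAt v w x) :
    HasDerivAt
      (fun y => R y / 2 * ‖v y‖ ^ 2 + R' y / 2 * re ⟪u y, v y⟫_ℂ - W y * R y / 2 * ‖u y‖ ^ 2)
      ((R x * re ⟪w, v x⟫_ℂ + R' x / 2 * re ⟪w, u x⟫_ℂ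
          - W x * R x * re ⟪u x, v x⟫_ℂ - W x * R' x / 2 * re ⟪u x, u x⟫_ℂ)
        - (w' * R x / 2 * ‖u x‖ ^ 2 - R' x * ‖v x‖ ^ 2 - r'' / 2 * re ⟪u x, v x⟫_ℂ)) x := by
  refine ((((hR.div_const 2).mul (hasDerivAt_norm_sq hv)).add
    ((hR'.div_const 2).mul (hasDerivAt_re_inner hu hv))).sub
      (((hW.mul hR).div_const 2).mul (hasDerivAt_norm_sq hu))).congr_deriv ?_
  simp only [Pi.mul_apply, inner_re_symm w, inner_self_eq_norm_sq]
  ring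

theorem im_integral_inner_schrodingerOp_symmMomentumOp {R W : ℝ → ℝ} (hR : ContDiff ℝ 2 R)
    (hR_growth : HasPolyGrowth R) (hR'_growth : HasPolyGrowth (deriv R))
    (hR''_growth : HasPolyGrowth (deriv (deriv R))) (hW : Differentiable ℝ W)
    (hW_growth : HasPolyGrowth W) (hW'R_growth : HasPolyGrowth fun x => deriv W x * R x)
    (u : 𝓢(ℝ, E)) :
    im (∫ x, ⟪schrodingerOp W u x, symmMomentumOp R u x⟫_ℂ) =
      ∫ x, (deriv W x * R x / 2 * ‖u x‖ ^ 2 - deriv R x * ‖deriv u x‖ ^ 2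
        - deriv (deriv R) x / 2 * re ⟪u x, deriv u x⟫_ℂ) := by
  obtain ⟨v, hv⟩ := exists_schwartz_coe_eq_deriv u
  obtain ⟨w, hw⟩ := exists_schwartz_coe_eq_deriv v
  have hR_cont : Continuous R := hR.continuous
  have hR' : ContDiff ℝ 1 (deriv R) := hR.deriv'
  have hR'_cont : Continuous (deriv R) := hR'.continuous
  have hW_cont : Continuous W := hW.continuous
  have inner_eq (x : ℝ) : ⟪schrodingerOp W u x, symmMomentumOp R u x⟫_ℂ =
      I * (R x • ⟪w x, v x⟫_ℂ + (deriv R x / 2) • ⟪w x, u x⟫_ℂ - (W x * R x) • ⟪u x, v x⟫_ℂ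
        - (W x * deriv R x / 2) • ⟪u x, u x⟫_ℂ) := by
    rw [schrodingerOp, symmMomentumOp, ← hv, ← hw]
    exact inner_schrodinger_symmMomentum ..
  have inner_int : Integrable fun x => ⟪schrodingerOp W u x, symmMomentumOp R u x⟫_ℂ := by
    simp only [inner_eq]
    exact ((((hR_growth.integrable_smul_inner (by fun_prop) w v).add
      ((hR'_growth.div_const 2).integrable_smul_inner (by fun_prop) w u)).sub
      ((hW_growth.mul hR_growth).integrable_smul_inner (by fun_prop) u v)).sub
      (((hW_growth.mul hR'_growth).div_const 2).integrable_smul_inner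
        (by fun_prop) u u)).const_mul I
  have flux_int : Integrable fun x => R x / 2 * ‖v x‖ ^ 2 + deriv R x / 2 * re ⟪u x, v x⟫_ℂ
      - W x * R x / 2 * ‖u x‖ ^ 2 :=
    (((hR_growth.div_const 2).integrable_mul_norm_sq (by fun_prop) v).add
      ((hR'_growth.div_const 2).integrable_mul_re_inner (by fun_prop) u v)).sub
      (((hW_growth.mul hR_growth).div_const 2).integrable_mul_norm_sq (by fun_prop) u)
  have rhs_int : Integrable fun x => deriv W x * R x / 2 * ‖u x‖ ^ 2 - deriv R x * ‖v x‖ ^ 2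
      - deriv (deriv R) x / 2 * re ⟪u x, v x⟫_ℂ :=
    (((hW'R_growth.div_const 2).integrable_mul_norm_sq (by fun_prop) u).sub
      (hR'_growth.integrable_mul_norm_sq (by fun_prop) v)).sub
      ((hR''_growth.div_const 2).integrable_mul_re_inner (by fun_prop) u v)
  rw [← integral_im inner_int, ← hv]
  refine integral_eq_integral_of_hasDerivAt_sub (fun x => ?_) flux_int inner_int.im rhs_int
  have hu' : HasDerivAt u (v x) x := hv ▸ u.differentiableAt.hasDerivAt
  have hv' : HasDerivAt v (w x) x := hw ▸ v.differentiableAt.hasDerivAt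
  refine (hasDerivAt_commutator_flux (hR.differentiable two_ne_zero x).hasDerivAt
    (hR'.differentiable one_ne_zero x).hasDerivAt (hW x).hasDerivAt hu' hv').congr_deriv ?_
  rw [inner_eq]
  simp

theorem abs_commutator_density_le {r' r'' w' w K M a b c : ℝ} (hr' : |r'| ≤ K) (hr'' : |r''| ≤ K)
    (hw : 1 ≤ w) (hw' : |w'| ≤ M * w) (hc : |c| ≤ a * b) :
    |w' / 2 * a ^ 2 - r' * b ^ 2 - r'' / 2 * c| ≤ (5 / 4 * K + M / 2) * (b ^ 2 + w * a ^ 2) := by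
  have hK : 0 ≤ K := (abs_nonneg _).trans hr'
  have hM : 0 ≤ M := nonneg_of_mul_nonneg_left ((abs_nonneg _).trans hw') (by linarith)
  have hw_term : |w' / 2 * a ^ 2| ≤ M / 2 * (w * a ^ 2) := by
    rw [abs_mul, abs_of_nonneg (sq_nonneg a), abs_div, abs_two]
    nlinarith [sq_nonneg a]
  have hr'_term : |r' * b ^ 2| ≤ K * b ^ 2 := by
    rw [abs_mul, abs_of_nonneg (sq_nonneg b)]
    gcongr
  have hr''_term : |r'' / 2 * c| ≤ K / 4 * (a ^ 2 + b ^ 2) := by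
    rw [abs_mul, abs_div, abs_two]
    calc |r''| / 2 * |c| ≤ K / 2 * (a * b) := by gcongr
      _ ≤ K / 4 * (a ^ 2 + b ^ 2) := by nlinarith [two_mul_le_add_sq a b]
  have ha_le : a ^ 2 ≤ w * a ^ 2 := le_mul_of_one_le_left (sq_nonneg a) hw
  calc _ ≤ |w' / 2 * a ^ 2| + |r' * b ^ 2| + |r'' / 2 * c| :=
        (abs_sub _ _).trans (add_le_add_left (abs_sub _ _) _)
    _ ≤ M / 2 * (w * a ^ 2) + K * b ^ 2 + K / 4 * (a ^ 2 + b ^ 2) := by gcongr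
    _ ≤ (5 / 4 * K + M / 2) * (b ^ 2 + w * a ^ 2) := by
      nlinarith [mul_le_mul_of_nonneg_left ha_le hK, mul_nonneg hM (sq_nonneg b),
        mul_nonneg hK (sq_nonneg a)]

theorem norm_commutator_schrodingerOp_symmMomentumOp_le {R W : ℝ → ℝ} {K M : ℝ}
    (hR : ContDiff ℝ 2 R) (hR' : ∀ x, |deriv R x| ≤ K) (hR'' : ∀ x, |deriv (deriv R) x| ≤ K)
    (hW : Differentiable ℝ W) (hW_growth : HasPolyGrowth W) (hW_one : ∀ x, 1 ≤ W x)
    (hW'R : ∀ x, |deriv W x * R x| ≤ M * W x) (u : 𝓢(ℝ, E)) :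
    ‖(∫ x, ⟪schrodingerOp W u x, symmMomentumOp R u x⟫_ℂ) -
        ∫ x, ⟪symmMomentumOp R u x, schrodingerOp W u x⟫_ℂ‖ ≤
      (5 / 2 * K + M) * re (∫ x, ⟪schrodingerOp W u x, u x⟫_ℂ) := by
  have hR_growth : HasPolyGrowth R := .of_norm_deriv_le (hR.differentiable two_ne_zero) hR'
  have hW'R_growth : HasPolyGrowth fun x => deriv W x * R x :=
    (hW_growth.const_mul M).of_isBigO <| .of_norm_le fun x => hW'R x
  have swap : ∫ x, ⟪symmMomentumOp R u x, schrodingerOp W u x⟫_ℂ =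
      starRingEnd ℂ (∫ x, ⟪schrodingerOp W u x, symmMomentumOp R u x⟫_ℂ) := by
    simp only [← integral_conj, inner_conj_symm]
  have im_le : |im (∫ x, ⟪schrodingerOp W u x, symmMomentumOp R u x⟫_ℂ)| ≤
      (5 / 4 * K + M / 2) * re (∫ x, ⟪schrodingerOp W u x, u x⟫_ℂ) := by
    obtain ⟨v, hv⟩ := exists_schwartz_coe_eq_deriv u
    rw [im_integral_inner_schrodingerOp_symmMomentumOp hR hR_growth (.of_bound hR')
        (.of_bound hR'') hW hW_growth hW'R_growth,
      re_integral_inner_schrodingerOp_self hW_growth hW.continuous.aestronglyMeasurable,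
      ← integral_const_mul, ← hv, ← Real.norm_eq_abs]
    refine norm_integral_le_of_norm_le ((integrable_norm_sq_add_mul_norm_sq hW_growth
      hW.continuous.aestronglyMeasurable u v).const_mul _) (.of_forall fun x => ?_)
    exact abs_commutator_density_le (hR' x) (hR'' x) (hW_one x) (hW'R x)
      ((RCLike.abs_re_le_norm _).trans (norm_inner_le_norm _ _))
  rw [swap, Complex.sub_conj, norm_mul, Complex.norm_I, mul_one, Complex.norm_real,
    Real.norm_eq_abs, abs_mul, abs_two]
  linarith [show |(∫ x, ⟪schrodingerOp W u x, symmMomentumOp R u x⟫_ℂ).im| ≤ _ from im_le]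

end Commutator

section Potential

/-- The potential of the comparison operator `N = -d²/dx² + λ²g² + (1 + x²)`. -/
def nelsonPotential (g : ℝ → ℝ) (lam x : ℝ) : ℝ := lam ^ 2 * g x ^ 2 + (1 + x ^ 2)

theorem Nop_eq_schrodingerOp (g : ℝ → ℝ) (lam : ℝ) (u : ℝ → V4) :
    Nop g lam u = schrodingerOp (nelsonPotential g lam) u := by
  funext x
  simp only [Nop, Qop, schrodingerOp, nelsonPotential, add_smul (lam ^ 2 * g x ^ 2), add_assoc]

theorem Amop_eq_symmMomentumOp (jm : ℝ → ℝ) (S : ℝ) (u : ℝ → V4) :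
    Amop jm S u = symmMomentumOp (Rm jm S) u :=
  rfl

theorem one_le_nelsonPotential (g : ℝ → ℝ) (lam x : ℝ) : 1 ≤ nelsonPotential g lam x := by
  rw [nelsonPotential]
  nlinarith [sq_nonneg (lam * g x), sq_nonneg x]

theorem hasPolyGrowth_nelsonPotential {g : ℝ → ℝ} (hg : HasPolyGrowth g) (lam : ℝ) :
    HasPolyGrowth (nelsonPotential g lam) := by
  simpa only [← sq] using! ((hg.mul hg).const_mul (lam ^ 2)).add
    (HasPolyGrowth.one.add (HasPolyGrowth.id.mul HasPolyGrowth.id))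

theorem hasDerivAt_nelsonPotential {g : ℝ → ℝ} {g' x : ℝ} (hg : HasDerivAt g g' x) (lam : ℝ) :
    HasDerivAt (nelsonPotential g lam) (2 * lam ^ 2 * (g x * g') + 2 * x) x := by
  refine (((hg.pow 2).const_mul (lam ^ 2)).add
    (((hasDerivAt_id x).pow 2).const_add 1)).congr_deriv ?_
  simp only [id_eq]
  push_cast
  ring

theorem abs_deriv_nelsonPotential_mul_le {g : ℝ → ℝ} {x r M : ℝ} (hg : DifferentiableAt ℝ g x)
    (hr : |r| ≤ M * |x|) (hM : 0 ≤ M) (hrg : |r * deriv g x| ≤ M * |g x|) (lam : ℝ) :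
    |deriv (nelsonPotential g lam) x * r| ≤ 2 * M * nelsonPotential g lam x := by
  have hg_term : |g x * (r * deriv g x)| ≤ M * g x ^ 2 := by
    rw [abs_mul, ← sq_abs (g x)]
    nlinarith [abs_nonneg (g x)]
  have hx_term : |x * r| ≤ M * x ^ 2 := by
    rw [abs_mul, ← sq_abs x]
    nlinarith [abs_nonneg x]
  rw [(hasDerivAt_nelsonPotential hg.hasDerivAt lam).deriv]
  calc |(2 * lam ^ 2 * (g x * deriv g x) + 2 * x) * r|
      = |2 * lam ^ 2 * (g x * (r * deriv g x)) + 2 * (x * r)| := by ring_nf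
    _ ≤ 2 * lam ^ 2 * |g x * (r * deriv g x)| + 2 * |x * r| := by
      refine (abs_add_le _ _).trans_eq ?_
      rw [abs_mul (2 * lam ^ 2), abs_mul 2 (x * r), abs_two,
        abs_of_nonneg (by positivity : 0 ≤ 2 * lam ^ 2)]
    _ ≤ 2 * lam ^ 2 * (M * g x ^ 2) + 2 * (M * x ^ 2) := by gcongr
    _ ≤ 2 * M * nelsonPotential g lam x := by
      rw [nelsonPotential]
      linarith

end Potential

section Cutoff

open Set

theorem exists_pos_bound_of_eqOn_ends {F : Type*} [NormedAddCommGroup F] {f : ℝ → F}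
    (hf : Continuous f) {a b : ℝ} {y z : F} (ha : EqOn f (fun _ => y) (Iio a))
    (hb : EqOn f (fun _ => z) (Ioi b)) : ∃ K > 0, ∀ x, ‖f x‖ ≤ K := by
  obtain ⟨C, hC⟩ := isCompact_Icc.exists_bound_of_continuousOn (s := Icc a b) hf.continuousOn
  refine ⟨max C (max ‖y‖ ‖z‖) + 1, ?_, fun x => (?_ : _ ≤ max C (max ‖y‖ ‖z‖)).trans (by simp)⟩
  · linarith [(norm_nonneg y).trans ((le_max_left _ _).trans (le_max_right C (max ‖y‖ ‖z‖)))]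
  rcases lt_or_ge x a with hxa | hxa
  · simp [ha hxa]
  rcases lt_or_ge b x with hxb | hxb
  · simp [hb hxb]
  · exact le_max_of_le_left (hC x ⟨hxa, hxb⟩)

variable {jm : ℝ → ℝ} {S a b : ℝ}

theorem contDiff_Rm {n : WithTop ℕ∞} (hjm : ContDiff ℝ n jm) (S : ℝ) : ContDiff ℝ n (Rm jm S) :=
  ((hjm.comp (contDiff_id.div_const S)).pow 2).mul contDiff_id

theorem Rm_eqOn_Iio (hS : 0 < S) (hjm : ∀ t ≤ a, jm t = 1) : EqOn (Rm jm S) id (Iio (a * S)) :=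
  fun x hx => by simp [Rm, hjm (x / S) ((div_le_iff₀ hS).2 (le_of_lt hx))]

theorem Rm_eqOn_Ioi (hS : 0 < S) (hjm : ∀ t, b ≤ t → jm t = 0) :
    EqOn (Rm jm S) (fun _ => 0) (Ioi (b * S)) :=
  fun x hx => by simp [Rm, hjm (x / S) ((le_div_iff₀ hS).2 (le_of_lt hx))]

theorem exists_pos_bound_deriv_Rm (hjm : ContDiff ℝ 2 jm) (hS : 0 < S)
    (hjm_one : ∀ t ≤ a, jm t = 1) (hjm_zero : ∀ t, b ≤ t → jm t = 0) :
    ∃ K > 0, ∀ x, |deriv (Rm jm S) x| ≤ K ∧ |deriv (deriv (Rm jm S)) x| ≤ K := by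
  have hR' : ContDiff ℝ 1 (deriv (Rm jm S)) := (contDiff_Rm hjm S).deriv'
  have hR'_left : EqOn (deriv (Rm jm S)) (fun _ => 1) (Iio (a * S)) := fun x hx => by
    rw [(Rm_eqOn_Iio hS hjm_one).deriv isOpen_Iio hx, deriv_id]
  have hR'_right : EqOn (deriv (Rm jm S)) (fun _ => 0) (Ioi (b * S)) := fun x hx => by
    rw [(Rm_eqOn_Ioi hS hjm_zero).deriv isOpen_Ioi hx, deriv_const]
  have hR''_left : EqOn (deriv (deriv (Rm jm S))) (fun _ => 0) (Iio (a * S)) := fun x hx => by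
    rw [hR'_left.deriv isOpen_Iio hx, deriv_const]
  have hR''_right : EqOn (deriv (deriv (Rm jm S))) (fun _ => 0) (Ioi (b * S)) := fun x hx => by
    rw [hR'_right.deriv isOpen_Ioi hx, deriv_const]
  obtain ⟨K, hK_pos, hK⟩ := exists_pos_bound_of_eqOn_ends hR'.continuous hR'_left hR'_right
  obtain ⟨L, -, hL⟩ :=
    exists_pos_bound_of_eqOn_ends (hR'.continuous_deriv le_rfl) hR''_left hR''_right
  exact ⟨max K L, lt_max_of_lt_left hK_pos,
    fun x => ⟨le_max_of_le_left (hK x), le_max_of_le_right (hL x)⟩⟩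

theorem abs_Rm_mul_le {B : ℝ} (hB : ∀ t, |jm t| ≤ B) (S x y : ℝ) :
    |Rm jm S x * y| ≤ B ^ 2 * |x * y| := by
  rw [Rm, mul_assoc, abs_mul, abs_pow]
  gcongr
  exact hB _

theorem abs_Rm_mul_deriv_le {g : ℝ → ℝ} {B C : ℝ} (hS : 0 < S) (hB : ∀ t, |jm t| ≤ B)
    (hjm_zero : ∀ t, b ≤ t → jm t = 0) (hC : 0 ≤ C)
    (hxg' : ∀ x ≤ b * S, |x * deriv g x| ≤ C * |g x|) (x : ℝ) :
    |Rm jm S x * deriv g x| ≤ B ^ 2 * C * |g x| := by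
  rcases le_or_gt x (b * S) with hx | hx
  · rw [mul_assoc]
    exact (abs_Rm_mul_le hB S x _).trans (by gcongr; exact hxg' x hx)
  · rw [Rm_eqOn_Ioi hS hjm_zero hx, zero_mul, abs_zero]
    positivity

end Cutoff

theorem nelson_second_hypothesis_Aminus_general {g : ℝ → ℝ} (hg : Differentiable ℝ g)
    (hg_growth : HasPolyGrowth g) {S : ℝ} (hS : 0 < S) {jm : ℝ → ℝ} (hjm : ContDiff ℝ 2 jm)
    {a b : ℝ} (hjm_one : ∀ t ≤ a, jm t = 1) (hjm_zero : ∀ t, b ≤ t → jm t = 0) {C : ℝ}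
    (hxg' : ∀ x ≤ b * S, |x * deriv g x| ≤ C * |g x|) :
    ∃ d : ℝ, 0 < d ∧ ∀ (u : 𝓢(ℝ, V4)) (lam : ℝ),
      ‖L2inner (Nop g lam u) (Amop jm S u) - L2inner (Amop jm S u) (Nop g lam u)‖ ≤
        d * (L2inner (Nop g lam u) u).re := by
  obtain ⟨B, hB_pos, hB⟩ := exists_pos_bound_of_eqOn_ends hjm.continuous
    (fun t ht => hjm_one t (le_of_lt ht)) (fun t ht => hjm_zero t (le_of_lt ht))
  obtain ⟨K, hK_pos, hK⟩ := exists_pos_bound_deriv_Rm hjm hS hjm_one hjm_zero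
  set M := B ^ 2 * max 1 C
  have hR (x : ℝ) : |Rm jm S x| ≤ M * |x| := by
    calc |Rm jm S x| ≤ B ^ 2 * |x| := by simpa using abs_Rm_mul_le hB S x 1
      _ ≤ M * |x| := by
        gcongr
        exact le_mul_of_one_le_right (sq_nonneg B) (le_max_left 1 C)
  have hRg' (x : ℝ) : |Rm jm S x * deriv g x| ≤ M * |g x| :=
    abs_Rm_mul_deriv_le hS hB hjm_zero (by positivity)
      (fun x hx => (hxg' x hx).trans (by gcongr; exact le_max_right 1 C)) x
  refine ⟨5 / 2 * K + 2 * M, by positivity, fun u lam => ?_⟩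
  rw [Nop_eq_schrodingerOp, Amop_eq_symmMomentumOp]
  exact norm_commutator_schrodingerOp_symmMomentumOp_le (contDiff_Rm hjm S)
    (fun x => (hK x).1) (fun x => (hK x).2)
    (fun x => (hasDerivAt_nelsonPotential (hg x).hasDerivAt lam).differentiableAt)
    (hasPolyGrowth_nelsonPotential hg_growth lam) (one_le_nelsonPotential g lam)
    (fun x => abs_deriv_nelsonPotential_mul_le (hg x) (hR x) (by positivity) (hRg' x) lam) u

/-- second Nelson hypothesis (commutator bound) for `(A₋, N)`: assuming in
addition `|x·g'(x)| ≤ C₂|g(x)|` for `x ≤ −3/2`, there is `d > 0` uniform in `λ ≥ 1` with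
`|⟨Nu, A₋u⟩ − ⟨A₋u, Nu⟩| ≤ d·⟨Nu, u⟩` for every Schwartz `u`. -/
theorem nelson_second_hypothesis_Aminus
    (g : ℝ → ℝ) (hg_smooth : ContDiff ℝ (⊤ : ℕ∞) g) (Cb : ℝ) (hg_bdd : ∀ x : ℝ, |g x| ≤ Cb)
    (Cg : ℝ) (hCg : 0 < Cg) (hg' : ∀ x : ℝ, |deriv g x| ≤ Cg * |g x|)
    (S : ℝ) (hS : 1 ≤ S)
    (jm : ℝ → ℝ) (hjm_smooth : ContDiff ℝ (⊤ : ℕ∞) jm)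
    (hjm_range : ∀ t : ℝ, jm t ∈ Set.Icc (0 : ℝ) 1)
    (hjm_one : ∀ t : ℝ, t ≤ -2 → jm t = 1)
    (hjm_zero : ∀ t : ℝ, -(3 / 2 : ℝ) ≤ t → jm t = 0)
    (C2 : ℝ) (hC2 : 0 < C2)
    (hxg' : ∀ x : ℝ, x ≤ -(3 / 2 : ℝ) → |x * deriv g x| ≤ C2 * |g x|) :
    ∃ d : ℝ, 0 < d ∧ ∀ (u : SchwartzMap ℝ V4) (lam : ℝ), 1 ≤ lam →
      ‖L2inner (Nop g lam ⇑u) (Amop jm S ⇑u) - L2inner (Amop jm S ⇑u) (Nop g lam ⇑u)‖ ≤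
        d * (L2inner (Nop g lam ⇑u) ⇑u).re := by
  obtain ⟨d, hd, hbound⟩ := nelson_second_hypothesis_Aminus_general (S := S)
    (hg_smooth.differentiable (by simp)) (.of_bound hg_bdd) (by linarith)
    (contDiff_infty.1 hjm_smooth 2) hjm_one hjm_zero fun x hx => hxg' x (by linarith)
  exact ⟨d, hd, fun u lam _ => hbound u lam⟩
end
end

section
/- Assume in addition that for all x ≤ −3/2: |x·g'(x)| ≤ C₂|g(x)|, |x²·g''(x)| ≤ C₄|g(x)|, |x·f'(x)| ≤ C₃, and |x²·f''(x)| ≤ C₅, for constants C₂, C₃, C₄, C₅ > 0. Define, for u in the Schwartz space, Tu = −(1/2)Γ¹R₋'R₋''u − i(R₋')²Γ¹Du + iR₋R₋''Γ¹Du − (i/2)Γ¹R₋R₋'''u − iR₋·((R₋g')'·λΓ²u + (R₋f')'·u). Then there exists a constant c > 0, uniform in λ ≥ 1, such that for every u in the Schwartz space 𝒮(ℝ, ℂ⁴): ‖Tu‖ ≤ c(‖H₀u‖ + ‖u‖). (The operator −iT is the double commutator [i[H₀, A₋], A₋] computed on Schwartz functions, so [A₋, [A₋, H₀]] extends to a bounded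 operator from D(H₀) to L²(ℝ, ℂ⁴).) -/
noncomputable section

open MeasureTheory

/-- The operator
`T = −(1/2)Γ¹R₋'R₋'' − i(R₋')²Γ¹D + iR₋R₋''Γ¹D − (i/2)Γ¹R₋R₋''' − iR₋((R₋g')'λΓ² + (R₋f')')`,
so that `−iT = [i[H₀, A₋], A₋]` on Schwartz functions. -/
def DcommOp (Γ1 Γ2 : Matrix (Fin 4) (Fin 4) ℂ) (g f : ℝ → ℝ) (lam : ℝ)
    (jm : ℝ → ℝ) (S : ℝ) (u : ℝ → V4) : ℝ → V4 :=
  fun x =>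
    (-(1 / 2 : ℝ) * (deriv (Rm jm S) x * deriv (deriv (Rm jm S)) x)) • Mop Γ1 (u x)
      - (Complex.I * ((deriv (Rm jm S) x ^ 2 : ℝ) : ℂ)) • Mop Γ1 (Dop u x)
      + (Complex.I * ((Rm jm S x * deriv (deriv (Rm jm S)) x : ℝ) : ℂ)) • Mop Γ1 (Dop u x)
      - ((Complex.I / 2) * ((Rm jm S x * deriv (deriv (deriv (Rm jm S))) x : ℝ) : ℂ)) •
          Mop Γ1 (u x)
      - (Complex.I * ((Rm jm S x : ℝ) : ℂ)) •
          ((lam * deriv (fun y => Rm jm S y * deriv g y) x) • Mop Γ2 (u x)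
            + deriv (fun y => Rm jm S y * deriv f y) x • u x)

/-!
The mass term `h = λg` satisfies `|h'| ≤ C_g|h|` with a constant independent of `λ`. Squaring the
free operator gives `(Γ¹D + hΓ²)² = D² + h² - ih'Γ¹Γ²`, whose last term is therefore absorbed by
`h²` up to a multiple of the identity; hence `‖u'‖` and `‖hu‖` are controlled by `‖H₀u‖ + ‖u‖`,
uniformly in `λ`. On the other hand `R₋` is the identity near `-∞` and vanishes near `+∞`, so `R₋'`,
`R₋'R₋''`, `R₋R₋''` and `R₋R₋'''` are bounded, `|R₋| ≤ C|x|`, and the decay hypotheses turn into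
`|R₋(R₋h')'| ≤ C|h|` and `|R₋(R₋f')'| ≤ C`. Thus `|Tu| ≤ K(|u| + |u'| + |hu|)` pointwise.
-/

open Filter InnerProductSpace
open scoped Topology

section Boundedness

theorem exists_norm_le_of_continuous_of_eventually_cocompact {X F : Type*} [TopologicalSpace X]
    [SeminormedAddCommGroup F] {φ : X → F} (hφ : Continuous φ) {C : ℝ}
    (hC : ∀ᶠ x in cocompact X, ‖φ x‖ ≤ C) : ∃ K, ∀ x, ‖φ x‖ ≤ K := by
  obtain ⟨s, hs, hsC⟩ := mem_cocompact.1 hC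
  obtain ⟨M, hM⟩ := hs.exists_bound_of_continuousOn hφ.continuousOn
  refine ⟨max M C, fun x => ?_⟩
  by_cases hx : x ∈ s
  · exact (hM x hx).trans (le_max_left _ _)
  · exact (show ‖φ x‖ ≤ C from hsC hx).trans (le_max_right _ _)

theorem sqrt_le_sqrt_mul_sqrt_add_sqrt {a b c C : ℝ} (hC : 0 ≤ C) (hb : 0 ≤ b) (hc : 0 ≤ c)
    (h : a ≤ C * (b + c)) : √a ≤ √C * (√b + √c) := by
  refine Real.sqrt_le_iff.2 ⟨by positivity, h.trans ?_⟩
  rw [mul_pow, Real.sq_sqrt hC, add_sq, Real.sq_sqrt hb, Real.sq_sqrt hc]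
  gcongr
  nlinarith [mul_nonneg (Real.sqrt_nonneg b) (Real.sqrt_nonneg c)]

variable {α E₀ E₁ E₂ E₃ : Type*} [MeasurableSpace α] {μ : Measure α}
  [NormedAddCommGroup E₀] [NormedAddCommGroup E₁] [NormedAddCommGroup E₂] [NormedAddCommGroup E₃]

theorem integral_norm_sq_le_of_norm_le_add_add {v : α → E₀} {u₁ : α → E₁} {u₂ : α → E₂}
    {u₃ : α → E₃} {K : ℝ} (h₁ : MemLp u₁ 2 μ) (h₂ : MemLp u₂ 2 μ) (h₃ : MemLp u₃ 2 μ)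
    (hv : ∀ x, ‖v x‖ ≤ K * (‖u₁ x‖ + ‖u₂ x‖ + ‖u₃ x‖)) :
    ∫ x, ‖v x‖ ^ 2 ∂μ ≤
      3 * K ^ 2 * ((∫ x, ‖u₁ x‖ ^ 2 ∂μ) + (∫ x, ‖u₂ x‖ ^ 2 ∂μ) + ∫ x, ‖u₃ x‖ ^ 2 ∂μ) := by
  have i₁ := h₁.norm.integrable_sq
  have i₂ := h₂.norm.integrable_sq
  have i₃ := h₃.norm.integrable_sq
  have hsq (x : α) : ‖v x‖ ^ 2 ≤ 3 * K ^ 2 * (‖u₁ x‖ ^ 2 + ‖u₂ x‖ ^ 2 + ‖u₃ x‖ ^ 2) :=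
    calc ‖v x‖ ^ 2 ≤ (K * (‖u₁ x‖ + ‖u₂ x‖ + ‖u₃ x‖)) ^ 2 := by gcongr; exact hv x
      _ = K ^ 2 * (‖u₁ x‖ + ‖u₂ x‖ + ‖u₃ x‖) ^ 2 := mul_pow _ _ _
      _ ≤ K ^ 2 * (3 * (‖u₁ x‖ ^ 2 + ‖u₂ x‖ ^ 2 + ‖u₃ x‖ ^ 2)) := by
        gcongr
        linarith [sq_nonneg (‖u₁ x‖ - ‖u₂ x‖), sq_nonneg (‖u₁ x‖ - ‖u₃ x‖),
          sq_nonneg (‖u₂ x‖ - ‖u₃ x‖)]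
      _ = _ := by ring
  calc ∫ x, ‖v x‖ ^ 2 ∂μ
      ≤ ∫ x, 3 * K ^ 2 * (‖u₁ x‖ ^ 2 + ‖u₂ x‖ ^ 2 + ‖u₃ x‖ ^ 2) ∂μ :=
        integral_mono_of_nonneg (.of_forall fun _ => by positivity)
          (((i₁.add i₂).add i₃).const_mul _) (.of_forall hsq)
    _ = _ := by
        rw [integral_const_mul, integral_add (by exact i₁.add i₂) i₃, integral_add i₁ i₂]

theorem memLp_smul_of_norm_le {u : α → E₁} {p : ENNReal} [NormedSpace ℝ E₁] {h : α → ℝ} {b : ℝ}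
    (hh : AEStronglyMeasurable h μ) (hb : ∀ x, |h x| ≤ b) (hu : MemLp u p μ) :
    MemLp (fun x => h x • u x) p μ :=
  hu.of_le_mul (hh.smul hu.1) (.of_forall fun x => by
    rw [norm_smul]
    exact mul_le_mul_of_nonneg_right (hb x) (norm_nonneg _))

end Boundedness

variable {E : Type*} [NormedAddCommGroup E] [InnerProductSpace ℂ E]

/-- A pair of anticommuting symmetric involutions: a representation of the Clifford algebra on two
generators, abstracting the matrices `Γ¹, Γ²`. -/
structure IsCliffordPair (A B : E →L[ℂ] E) : Prop where
  isSymmetric_left : (A : E →ₗ[ℂ] E).IsSymmetric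
  isSymmetric_right : (B : E →ₗ[ℂ] E).IsSymmetric
  mul_self_left : A * A = 1
  mul_self_right : B * B = 1
  anticomm : A * B + B * A = 0

/-- The one-dimensional Dirac operator `A D + h B + f` with `D = -i d/dx`. The mass term `h` stands
for `λg`, so that uniformity in `λ` becomes uniformity in `h`. -/
def diracOp (A B : E →L[ℂ] E) (h f : ℝ → ℝ) (u : ℝ → E) : ℝ → E :=
  fun x => A ((-Complex.I) • deriv u x) + h x • B (u x) + f x • u x

/-- The operator `T` such that `-iT` is the double commutator `[i[H, 𝒜], 𝒜]` of the Dirac operator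
`H = A D + h B + f` and the conjugate operator `𝒜 = ½{R, D}`, written out on smooth functions. -/
def doubleCommutatorOp (A B : E →L[ℂ] E) (h f R : ℝ → ℝ) (u : ℝ → E) : ℝ → E :=
  fun x =>
    (-(1 / 2 : ℝ) * (deriv R x * deriv (deriv R) x)) • A (u x)
      - (Complex.I * ((deriv R x ^ 2 : ℝ) : ℂ)) • A ((-Complex.I) • deriv u x)
      + (Complex.I * ((R x * deriv (deriv R) x : ℝ) : ℂ)) • A ((-Complex.I) • deriv u x)
      - ((Complex.I / 2) * ((R x * deriv (deriv (deriv R)) x : ℝ) : ℂ)) • A (u x)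
      - (Complex.I * ((R x : ℝ) : ℂ)) •
          (deriv (fun y => R y * deriv h y) x • B (u x)
            + deriv (fun y => R y * deriv f y) x • u x)

variable {A B : E →L[ℂ] E}

theorem memLp_diracOp {h f : ℝ → ℝ} (hh : AEStronglyMeasurable h) {b M : ℝ}
    (hb : ∀ x, |h x| ≤ b) (hf : AEStronglyMeasurable f) (hM : ∀ x, |f x| ≤ M) {u : ℝ → E}
    (hu₂ : MemLp u 2) (hu₂' : MemLp (deriv u) 2) : MemLp (diracOp A B h f u) 2 :=
  ((A.comp_memLp' (hu₂'.const_smul (-Complex.I))).add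
    (memLp_smul_of_norm_le hh hb (B.comp_memLp' hu₂))).add (memLp_smul_of_norm_le hf hM hu₂)

theorem integral_norm_diracOp_zero_sq_le {h f : ℝ → ℝ} (hh : AEStronglyMeasurable h) {b M : ℝ}
    (hb : ∀ x, |h x| ≤ b) (hf : AEStronglyMeasurable f) (hM : ∀ x, |f x| ≤ M) {u : ℝ → E}
    (hu₂ : MemLp u 2) (hu₂' : MemLp (deriv u) 2) :
    ∫ x, ‖diracOp A B h 0 u x‖ ^ 2 ≤
      2 * (∫ x, ‖diracOp A B h f u x‖ ^ 2) + 2 * M ^ 2 * ∫ x, ‖u x‖ ^ 2 := by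
  have hpt (x : ℝ) : ‖diracOp A B h 0 u x‖ ^ 2 ≤
      2 * ‖diracOp A B h f u x‖ ^ 2 + 2 * M ^ 2 * ‖u x‖ ^ 2 := by
    have hsub : diracOp A B h 0 u x = diracOp A B h f u x - f x • u x := by simp [diracOp]
    have hpot : ‖f x • u x‖ ≤ M * ‖u x‖ := by
      rw [norm_smul]
      exact mul_le_mul_of_nonneg_right (hM x) (norm_nonneg _)
    calc ‖diracOp A B h 0 u x‖ ^ 2 ≤ (‖diracOp A B h f u x‖ + M * ‖u x‖) ^ 2 := by
          gcongr
          rw [hsub]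
          exact norm_sub_le_of_le le_rfl hpot
      _ ≤ 2 * (‖diracOp A B h f u x‖ ^ 2 + (M * ‖u x‖) ^ 2) := add_sq_le
      _ = _ := by ring
  have hH := (memLp_diracOp (A := A) (B := B) hh hb hf hM hu₂ hu₂').norm.integrable_sq
  have hU := hu₂.norm.integrable_sq
  calc ∫ x, ‖diracOp A B h 0 u x‖ ^ 2
      ≤ ∫ x, (2 * ‖diracOp A B h f u x‖ ^ 2 + 2 * M ^ 2 * ‖u x‖ ^ 2) :=
        integral_mono_of_nonneg (.of_forall fun _ => by positivity)
          ((hH.const_mul _).add (hU.const_mul _)) (.of_forall hpt)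
    _ = _ := by
        rw [integral_add (hH.const_mul _) (hU.const_mul _), integral_const_mul, integral_const_mul]

theorem norm_apply_of_isSymmetric_of_mul_self_eq_one (hA : (A : E →ₗ[ℂ] E).IsSymmetric)
    (hA_sq : A * A = 1) (v : E) : ‖A v‖ = ‖v‖ := by
  have h : ⟪A v, A v⟫_ℂ = ⟪v, v⟫_ℂ := by
    rw [hA.apply_clm, ← mul_apply_eq_comp, hA_sq, one_apply_eq_self]
  rw [norm_eq_sqrt_re_inner (𝕜 := ℂ), h, ← norm_eq_sqrt_re_inner]

namespace IsCliffordPair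

theorem norm_left_apply (hAB : IsCliffordPair A B) (v : E) : ‖A v‖ = ‖v‖ :=
  norm_apply_of_isSymmetric_of_mul_self_eq_one hAB.isSymmetric_left hAB.mul_self_left v

theorem norm_right_apply (hAB : IsCliffordPair A B) (v : E) : ‖B v‖ = ‖v‖ :=
  norm_apply_of_isSymmetric_of_mul_self_eq_one hAB.isSymmetric_right hAB.mul_self_right v

theorem abs_im_inner_le (hAB : IsCliffordPair A B) (p q : E) :
    |(⟪A p, B q⟫_ℂ).im| ≤ ‖p‖ * ‖q‖ := by
  simpa only [hAB.norm_left_apply, hAB.norm_right_apply]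
    using (Complex.abs_im_le_norm _).trans (norm_inner_le_norm (𝕜 := ℂ) (A p) (B q))

-- `i A B` is symmetric because `A` and `B` anticommute.
theorem im_inner_comm (hAB : IsCliffordPair A B) (p q : E) :
    (⟪A p, B q⟫_ℂ).im = (⟪A q, B p⟫_ℂ).im := by
  have hBA : B (A q) = -A (B q) := by
    have h := DFunLike.congr_fun hAB.anticomm q
    exact eq_neg_of_add_eq_zero_right h
  calc (⟪A p, B q⟫_ℂ).im = (⟪p, A (B q)⟫_ℂ).im := by rw [hAB.isSymmetric_left.apply_clm]
    _ = -(⟪p, B (A q)⟫_ℂ).im := by rw [hBA, inner_neg_right, Complex.neg_im, neg_neg]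
    _ = -(⟪B p, A q⟫_ℂ).im := by rw [hAB.isSymmetric_right.apply_clm]
    _ = (⟪A q, B p⟫_ℂ).im := by rw [← inner_conj_symm, Complex.conj_im, neg_neg]

theorem hasDerivAt_im_inner (hAB : IsCliffordPair A B) {u : ℝ → E} {u' : E} {x : ℝ}
    (hu : HasDerivAt u u' x) :
    HasDerivAt (fun y => (⟪A (u y), B (u y)⟫_ℂ).im) (2 * (⟪A u', B (u x)⟫_ℂ).im) x := by
  have hA := (A.restrictScalars ℝ).hasFDerivAt.comp_hasDerivAt x hu
  have hB := (B.restrictScalars ℝ).hasFDerivAt.comp_hasDerivAt x hu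
  refine (Complex.imCLM.hasFDerivAt.comp_hasDerivAt x (hA.inner ℂ hB)).congr_deriv ?_
  simp only [Complex.imCLM_apply, Complex.add_im, ContinuousLinearMap.coe_restrictScalars',
    Function.comp_apply, hAB.im_inner_comm (u x) u']
  ring

theorem norm_diracOp_zero_sq (hAB : IsCliffordPair A B) (h : ℝ → ℝ) (u : ℝ → E) (x : ℝ) :
    ‖diracOp A B h 0 u x‖ ^ 2 =
      ‖deriv u x‖ ^ 2 + ‖h x • u x‖ ^ 2 - h x * (2 * (⟪A (deriv u x), B (u x)⟫_ℂ).im) := by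
  have hcross : RCLike.re ⟪A ((-Complex.I) • deriv u x), h x • B (u x)⟫_ℂ =
      -(h x * (⟪A (deriv u x), B (u x)⟫_ℂ).im) := by
    rw [← Complex.coe_smul, map_smul, inner_smul_left, inner_smul_right]
    simp
  have hnorm_deriv : ‖A ((-Complex.I) • deriv u x)‖ = ‖deriv u x‖ := by
    simp [hAB.norm_left_apply, norm_smul]
  have hnorm_mass : ‖h x • B (u x)‖ = ‖h x • u x‖ := by
    simp only [norm_smul, hAB.norm_right_apply]
  have hzero : diracOp A B h 0 u x = A ((-Complex.I) • deriv u x) + h x • B (u x) := by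
    simp [diracOp]
  rw [hzero, norm_add_sq (𝕜 := ℂ), hcross, hnorm_deriv, hnorm_mass]
  ring

theorem integrable_mul_im_inner (hAB : IsCliffordPair A B) {k : ℝ → ℝ} {b : ℝ}
    (hk : AEStronglyMeasurable k) (hb : ∀ x, |k x| ≤ b) {p q : ℝ → E} (hp : MemLp p 2)
    (hq : MemLp q 2) : Integrable fun x => k x * (⟪A (p x), B (q x)⟫_ℂ).im := by
  have hmeas : AEStronglyMeasurable fun x => (⟪A (p x), B (q x)⟫_ℂ).im :=
    Complex.continuous_im.comp_aestronglyMeasurable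
      ((A.comp_memLp' hp).1.inner (𝕜 := ℂ) (B.comp_memLp' hq).1)
  have him : Integrable fun x => (⟪A (p x), B (q x)⟫_ℂ).im :=
    (hp.norm.integrable_mul hq.norm).mono' hmeas (.of_forall fun x => hAB.abs_im_inner_le _ _)
  exact him.bdd_mul hk (.of_forall hb)

-- The weak form of `(A D + h B)² = D² + h² - i h' A B`.
theorem integral_norm_diracOp_zero_sq (hAB : IsCliffordPair A B) {h : ℝ → ℝ}
    (hh : Differentiable ℝ h) {b b' : ℝ} (hb : ∀ x, |h x| ≤ b) (hb' : ∀ x, |deriv h x| ≤ b')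
    {u : ℝ → E} (hu : Differentiable ℝ u) (hu₂ : MemLp u 2) (hu₂' : MemLp (deriv u) 2) :
    ∫ x, ‖diracOp A B h 0 u x‖ ^ 2 =
      (∫ x, ‖deriv u x‖ ^ 2) + (∫ x, ‖h x • u x‖ ^ 2)
        + ∫ x, deriv h x * (⟪A (u x), B (u x)⟫_ℂ).im := by
  have hh_meas := hh.continuous.aestronglyMeasurable (μ := volume)
  have hcross : Integrable fun x => h x * (2 * (⟪A (deriv u x), B (u x)⟫_ℂ).im) := by
    simpa only [mul_left_comm _ (2 : ℝ)] using
      (hAB.integrable_mul_im_inner hh_meas hb hu₂' hu₂).const_mul 2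
  have hparts : ∫ x, h x * (2 * (⟪A (deriv u x), B (u x)⟫_ℂ).im) =
      -∫ x, deriv h x * (⟪A (u x), B (u x)⟫_ℂ).im :=
    integral_mul_deriv_eq_deriv_mul_of_integrable (fun x _ => (hh x).hasDerivAt)
      (fun x _ => hAB.hasDerivAt_im_inner (hu x).hasDerivAt) hcross
      (hAB.integrable_mul_im_inner (aestronglyMeasurable_deriv h _) hb' hu₂ hu₂)
      (hAB.integrable_mul_im_inner hh_meas hb hu₂ hu₂)
  have hderiv := hu₂'.norm.integrable_sq
  have hmass := (memLp_smul_of_norm_le hh_meas hb hu₂).norm.integrable_sq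
  simp_rw [hAB.norm_diracOp_zero_sq]
  rw [integral_sub (by exact hderiv.add hmass) hcross, integral_add hderiv hmass, hparts,
    sub_neg_eq_add]

theorem neg_le_two_mul_integral_deriv_mul_im_inner (hAB : IsCliffordPair A B) {h : ℝ → ℝ}
    (hh : Differentiable ℝ h) {b C : ℝ} (hb : ∀ x, |h x| ≤ b) (hC : ∀ x, |deriv h x| ≤ C * |h x|)
    {u : ℝ → E} (hu₂ : MemLp u 2) :
    -((∫ x, ‖h x • u x‖ ^ 2) + C ^ 2 * ∫ x, ‖u x‖ ^ 2) ≤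
      2 * ∫ x, deriv h x * (⟪A (u x), B (u x)⟫_ℂ).im := by
  have hh_meas := hh.continuous.aestronglyMeasurable (μ := volume)
  have hpt (x : ℝ) : -(‖h x • u x‖ ^ 2 + C ^ 2 * ‖u x‖ ^ 2) ≤
      2 * (deriv h x * (⟪A (u x), B (u x)⟫_ℂ).im) := by
    have habs : |deriv h x * (⟪A (u x), B (u x)⟫_ℂ).im| ≤ (C * |h x|) * (‖u x‖ * ‖u x‖) := by
      rw [abs_mul]
      exact mul_le_mul (hC x) (hAB.abs_im_inner_le _ _) (abs_nonneg _)
        ((abs_nonneg _).trans (hC x))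
    rw [norm_smul, Real.norm_eq_abs]
    linarith [neg_le_of_abs_le habs, sq_nonneg (|h x| * ‖u x‖ - C * ‖u x‖)]
  have hb' (x : ℝ) : |deriv h x| ≤ |C| * b :=
    (hC x).trans (mul_le_mul (le_abs_self C) (hb x) (abs_nonneg _) (abs_nonneg _))
  have hmass := (memLp_smul_of_norm_le hh_meas hb hu₂).norm.integrable_sq
  have hU := hu₂.norm.integrable_sq.const_mul (C ^ 2)
  have hcomm := hAB.integrable_mul_im_inner (aestronglyMeasurable_deriv h _) hb' hu₂ hu₂
  rw [← integral_const_mul, ← integral_add hmass hU, ← integral_neg, ← integral_const_mul]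
  exact integral_mono (hmass.add hU).neg (hcomm.const_mul 2) hpt

theorem integral_norm_deriv_sq_add_le (hAB : IsCliffordPair A B) {h f : ℝ → ℝ}
    (hh : Differentiable ℝ h) {b C M : ℝ} (hb : ∀ x, |h x| ≤ b)
    (hC : ∀ x, |deriv h x| ≤ C * |h x|) (hf : AEStronglyMeasurable f) (hM : ∀ x, |f x| ≤ M)
    {u : ℝ → E} (hu : Differentiable ℝ u) (hu₂ : MemLp u 2) (hu₂' : MemLp (deriv u) 2) :
    2 * (∫ x, ‖deriv u x‖ ^ 2) + (∫ x, ‖h x • u x‖ ^ 2) ≤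
      4 * (∫ x, ‖diracOp A B h f u x‖ ^ 2) + (4 * M ^ 2 + C ^ 2) * ∫ x, ‖u x‖ ^ 2 := by
  have hb' (x : ℝ) : |deriv h x| ≤ |C| * b :=
    (hC x).trans (mul_le_mul (le_abs_self C) (hb x) (abs_nonneg _) (abs_nonneg _))
  have henergy := hAB.integral_norm_diracOp_zero_sq hh hb hb' hu hu₂ hu₂'
  have hcomm := hAB.neg_le_two_mul_integral_deriv_mul_im_inner hh hb hC hu₂
  have hpot := integral_norm_diracOp_zero_sq_le (A := A) (B := B)
    hh.continuous.aestronglyMeasurable hb hf hM hu₂ hu₂'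
  linarith

theorem sqrt_integral_norm_sq_le_of_norm_le (hAB : IsCliffordPair A B) {h f : ℝ → ℝ}
    (hh : Differentiable ℝ h) {b C M K : ℝ} (hb : ∀ x, |h x| ≤ b)
    (hC : ∀ x, |deriv h x| ≤ C * |h x|) (hf : AEStronglyMeasurable f) (hM : ∀ x, |f x| ≤ M)
    {u v : ℝ → E} (hu : Differentiable ℝ u) (hu₂ : MemLp u 2) (hu₂' : MemLp (deriv u) 2)
    (hv : ∀ x, ‖v x‖ ≤ K * (‖u x‖ + ‖deriv u x‖ + ‖h x • u x‖)) :
    √(∫ x, ‖v x‖ ^ 2) ≤ √(3 * K ^ 2 * (4 * M ^ 2 + C ^ 2 + 5)) *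
      (√(∫ x, ‖diracOp A B h f u x‖ ^ 2) + √(∫ x, ‖u x‖ ^ 2)) := by
  have hmass := memLp_smul_of_norm_le hh.continuous.aestronglyMeasurable hb hu₂
  have henergy := hAB.integral_norm_deriv_sq_add_le hh hb hC hf hM hu hu₂ hu₂'
  have hU : 0 ≤ ∫ x, ‖u x‖ ^ 2 := by positivity
  have hU' : 0 ≤ ∫ x, ‖deriv u x‖ ^ 2 := by positivity
  have hH : 0 ≤ ∫ x, ‖diracOp A B h f u x‖ ^ 2 := by positivity
  refine sqrt_le_sqrt_mul_sqrt_add_sqrt (by positivity) hH hU ?_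
  calc ∫ x, ‖v x‖ ^ 2
      ≤ 3 * K ^ 2 *
          ((∫ x, ‖u x‖ ^ 2) + (∫ x, ‖deriv u x‖ ^ 2) + ∫ x, ‖h x • u x‖ ^ 2) :=
        integral_norm_sq_le_of_norm_le_add_add hu₂ hu₂' hmass hv
    _ ≤ 3 * K ^ 2 * ((4 * M ^ 2 + C ^ 2 + 5) *
          ((∫ x, ‖diracOp A B h f u x‖ ^ 2) + ∫ x, ‖u x‖ ^ 2)) := by
        gcongr
        nlinarith [mul_nonneg (sq_nonneg M) hH, mul_nonneg (sq_nonneg C) hH]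
    _ = _ := by ring

end IsCliffordPair

/-- The coefficients `R` of the conjugate operators `½{R, D}` adapted to a horizon at `-∞`: `R` is
the coordinate `x` near `-∞` and vanishes on `[-3/2, ∞)`. -/
structure IsHorizonCutoff (R : ℝ → ℝ) : Prop where
  contDiff : ContDiff ℝ 3 R
  exists_eq_self : ∃ a, ∀ x ≤ a, R x = x
  eq_zero : ∀ x, -(3 / 2) ≤ x → R x = 0

namespace IsHorizonCutoff

variable {R : ℝ → ℝ}

theorem contDiff_iterate_deriv (hR : IsHorizonCutoff R) {n k : ℕ} (hnk : n + k = 3) :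
    ContDiff ℝ n (deriv^[k] R) :=
  ContDiff.iterate_deriv' n k (by rw [hnk]; exact hR.contDiff)

theorem eventually_eventuallyEq (hR : IsHorizonCutoff R) :
    ∀ᶠ x in cocompact ℝ, R =ᶠ[𝓝 x] (fun y => y) ∨ R =ᶠ[𝓝 x] fun _ => 0 := by
  obtain ⟨a, ha⟩ := hR.exists_eq_self
  rw [cocompact_eq_atBot_atTop, eventually_sup]
  constructor
  · filter_upwards [eventually_lt_atBot a] with x hx
    exact .inl (by filter_upwards [Iio_mem_nhds hx] with y hy using ha y (le_of_lt hy))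
  · filter_upwards [eventually_gt_atTop (-(3 / 2))] with x hx
    exact .inr (by filter_upwards [Ioi_mem_nhds hx] with y hy using hR.eq_zero y (le_of_lt hy))

theorem eventually_deriv (hR : IsHorizonCutoff R) :
    ∀ᶠ x in cocompact ℝ, |deriv R x| ≤ 1 ∧ deriv (deriv R) x = 0 ∧
      deriv (deriv (deriv R)) x = 0 := by
  filter_upwards [hR.eventually_eventuallyEq] with x hx
  rcases hx with hx | hx <;>
    simp [hx.deriv_eq, hx.deriv.deriv_eq, hx.deriv.deriv.deriv_eq]

theorem exists_abs_deriv_le (hR : IsHorizonCutoff R) : ∃ k, ∀ x, |deriv R x| ≤ k :=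
  exists_norm_le_of_continuous_of_eventually_cocompact
    (hR.contDiff_iterate_deriv (n := 2) (k := 1) rfl).continuous
    (hR.eventually_deriv.mono fun _ hx => hx.1)

theorem exists_abs_deriv_mul_deriv_two_le (hR : IsHorizonCutoff R) :
    ∃ k, ∀ x, |deriv R x * deriv (deriv R) x| ≤ k :=
  exists_norm_le_of_continuous_of_eventually_cocompact (C := 0)
    ((hR.contDiff_iterate_deriv (n := 2) (k := 1) rfl).continuous.mul
      (hR.contDiff_iterate_deriv (n := 1) (k := 2) rfl).continuous)
    (hR.eventually_deriv.mono fun _ hx => by simp [hx.2.1])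

theorem exists_abs_mul_deriv_two_le (hR : IsHorizonCutoff R) :
    ∃ k, ∀ x, |R x * deriv (deriv R) x| ≤ k :=
  exists_norm_le_of_continuous_of_eventually_cocompact (C := 0)
    (hR.contDiff.continuous.mul (hR.contDiff_iterate_deriv (n := 1) (k := 2) rfl).continuous)
    (hR.eventually_deriv.mono fun _ hx => by simp [hx.2.1])

theorem exists_abs_mul_deriv_three_le (hR : IsHorizonCutoff R) :
    ∃ k, ∀ x, |R x * deriv (deriv (deriv R)) x| ≤ k :=
  exists_norm_le_of_continuous_of_eventually_cocompact (C := 0)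
    (hR.contDiff.continuous.mul (hR.contDiff_iterate_deriv (n := 0) (k := 3) rfl).continuous)
    (hR.eventually_deriv.mono fun _ hx => by simp [hx.2.2])

theorem differentiable (hR : IsHorizonCutoff R) : Differentiable ℝ R :=
  hR.contDiff.differentiable (by norm_num)

theorem abs_le_mul_abs (hR : IsHorizonCutoff R) {k : ℝ} (hk : ∀ x, |deriv R x| ≤ k) (x : ℝ) :
    |R x| ≤ k * |x| := by
  simpa [hR.eq_zero 0 (by norm_num)] using convex_univ.norm_image_sub_le_of_norm_deriv_le
    (fun y _ => hR.differentiable y) (fun y _ => hk y) (Set.mem_univ 0) (Set.mem_univ x)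

theorem exists_abs_mul_deriv_mul_deriv_le (hR : IsHorizonCutoff R) {h : ℝ → ℝ}
    (hh : Differentiable ℝ (deriv h)) {G : ℝ → ℝ} (hG : ∀ x, 0 ≤ G x) {c d : ℝ}
    (hc : ∀ x ≤ -(3 / 2 : ℝ), |x * deriv h x| ≤ c * G x)
    (hd : ∀ x ≤ -(3 / 2 : ℝ), |x ^ 2 * deriv (deriv h) x| ≤ d * G x) :
    ∃ C, ∀ x, |R x * deriv (fun y => R y * deriv h y) x| ≤ C * G x := by
  obtain ⟨k, hk⟩ := hR.exists_abs_deriv_le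
  have hk₀ : 0 ≤ k := (abs_nonneg _).trans (hk 0)
  refine ⟨k ^ 2 * (|c| + |d|), fun x => ?_⟩
  rcases le_total (-(3 / 2)) x with hx | hx
  · rw [hR.eq_zero x hx, zero_mul, abs_zero]
    exact mul_nonneg (by positivity) (hG x)
  have hRx := hR.abs_le_mul_abs hk x
  calc |R x * deriv (fun y => R y * deriv h y) x|
      = |deriv R x * (R x * deriv h x) + R x ^ 2 * deriv (deriv h) x| := by
        rw [deriv_fun_mul (hR.differentiable x) (hh x)]
        ring_nf
    _ ≤ |deriv R x| * (|R x| * |deriv h x|) + |R x| ^ 2 * |deriv (deriv h) x| := by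
        exact (abs_add_le _ _).trans_eq (by rw [abs_mul, abs_mul, abs_mul, abs_pow])
    _ ≤ k * (k * |x| * |deriv h x|) + (k * |x|) ^ 2 * |deriv (deriv h) x| := by
        gcongr
        exact hk x
    _ = k ^ 2 * (|x * deriv h x| + |x ^ 2 * deriv (deriv h) x|) := by
        simp only [abs_mul, abs_pow]
        ring
    _ ≤ k ^ 2 * (c * G x + d * G x) := by gcongr; exacts [hc x hx, hd x hx]
    _ ≤ k ^ 2 * (|c| * G x + |d| * G x) := by
        have := hG x
        gcongr
        exacts [le_abs_self c, le_abs_self d]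
    _ = k ^ 2 * (|c| + |d|) * G x := by ring

end IsHorizonCutoff

theorem norm_doubleCommutatorOp_le (hA : ∀ v, ‖A v‖ = ‖v‖) (hB : ∀ v, ‖B v‖ = ‖v‖)
    (h f R : ℝ → ℝ) (u : ℝ → E) (x : ℝ) :
    ‖doubleCommutatorOp A B h f R u x‖ ≤
      1 / 2 * |deriv R x * deriv (deriv R) x| * ‖u x‖ + deriv R x ^ 2 * ‖deriv u x‖
        + |R x * deriv (deriv R) x| * ‖deriv u x‖
        + 1 / 2 * |R x * deriv (deriv (deriv R)) x| * ‖u x‖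
        + (|R x * deriv (fun y => R y * deriv h y) x| * ‖u x‖
          + |R x * deriv (fun y => R y * deriv f y) x| * ‖u x‖) := by
  refine norm_sub_le_of_le (norm_sub_le_of_le (norm_add_le_of_le (norm_sub_le_of_le ?_ ?_) ?_) ?_)
    ?_
  · simp [norm_smul, hA]
  · simp [norm_smul, hA]
  · simp [norm_smul, hA]
  · simp [norm_smul, hA]
  · rw [smul_add]
    refine norm_add_le_of_le ?_ ?_ <;> simp [norm_smul, hB, mul_assoc]

theorem IsHorizonCutoff.exists_norm_doubleCommutatorOp_le {R : ℝ → ℝ} (hR : IsHorizonCutoff R)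
    (hA : ∀ v, ‖A v‖ = ‖v‖) (hB : ∀ v, ‖B v‖ = ‖v‖) {f : ℝ → ℝ} {Ch Cf : ℝ}
    (hf : ∀ x, |R x * deriv (fun y => R y * deriv f y) x| ≤ Cf) :
    ∃ K, ∀ h : ℝ → ℝ, (∀ x, |R x * deriv (fun y => R y * deriv h y) x| ≤ Ch * |h x|) →
      ∀ (u : ℝ → E) (x : ℝ),
        ‖doubleCommutatorOp A B h f R u x‖ ≤ K * (‖u x‖ + ‖deriv u x‖ + ‖h x • u x‖) := by
  obtain ⟨k₁, hk₁⟩ := hR.exists_abs_deriv_le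
  obtain ⟨k₁₂, hk₁₂⟩ := hR.exists_abs_deriv_mul_deriv_two_le
  obtain ⟨k₂, hk₂⟩ := hR.exists_abs_mul_deriv_two_le
  obtain ⟨k₃, hk₃⟩ := hR.exists_abs_mul_deriv_three_le
  let a := 1 / 2 * (k₁₂ + k₃) + Cf
  let b := k₁ ^ 2 + k₂
  refine ⟨max (max a b) Ch, fun h hh u x => ?_⟩
  have hk₁_sq : deriv R x ^ 2 ≤ k₁ ^ 2 := sq_le_sq.2 ((hk₁ x).trans (le_abs_self k₁))
  calc ‖doubleCommutatorOp A B h f R u x‖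
      ≤ _ := norm_doubleCommutatorOp_le hA hB h f R u x
    _ ≤ 1 / 2 * k₁₂ * ‖u x‖ + k₁ ^ 2 * ‖deriv u x‖ + k₂ * ‖deriv u x‖ + 1 / 2 * k₃ * ‖u x‖
          + (Ch * |h x| * ‖u x‖ + Cf * ‖u x‖) := by
        gcongr
        exacts [hk₁₂ x, hk₂ x, hk₃ x, hh x, hf x]
    _ = a * ‖u x‖ + b * ‖deriv u x‖ + Ch * ‖h x • u x‖ := by
        rw [norm_smul, Real.norm_eq_abs]
        simp only [a, b]
        ring
    _ ≤ max (max a b) Ch * ‖u x‖ + max (max a b) Ch * ‖deriv u x‖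
          + max (max a b) Ch * ‖h x • u x‖ := by
        gcongr <;> simp
    _ = _ := by ring

theorem deriv_mul_deriv_const_mul (R h : ℝ → ℝ) (c x : ℝ) :
    deriv (fun y => R y * deriv (fun z => c * h z) y) x =
      c * deriv (fun y => R y * deriv h y) x := by
  simp_rw [deriv_const_mul_field, mul_left_comm _ c, deriv_const_mul_field]

theorem double_commutator_H0_Aminus_bounded_general (hAB : IsCliffordPair A B) {g : ℝ → ℝ}
    (hg : ContDiff ℝ 2 g) {Cb : ℝ} (hg_bdd : ∀ x, |g x| ≤ Cb) {Cg : ℝ}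
    (hg' : ∀ x, |deriv g x| ≤ Cg * |g x|) {f : ℝ → ℝ} (hf : ContDiff ℝ 2 f) {Mf : ℝ}
    (hf_bdd : ∀ x, |f x| ≤ Mf) {R : ℝ → ℝ} (hR : IsHorizonCutoff R) {C2 C4 C3 C5 : ℝ}
    (hxg' : ∀ x ≤ -(3 / 2 : ℝ), |x * deriv g x| ≤ C2 * |g x|)
    (hx2g'' : ∀ x ≤ -(3 / 2 : ℝ), |x ^ 2 * deriv (deriv g) x| ≤ C4 * |g x|)
    (hxf' : ∀ x ≤ -(3 / 2 : ℝ), |x * deriv f x| ≤ C3)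
    (hx2f'' : ∀ x ≤ -(3 / 2 : ℝ), |x ^ 2 * deriv (deriv f) x| ≤ C5) :
    ∃ c, 0 < c ∧ ∀ (u : ℝ → E) (lam : ℝ), Differentiable ℝ u → MemLp u 2 → MemLp (deriv u) 2 →
      √(∫ x, ‖doubleCommutatorOp A B (fun y => lam * g y) f R u x‖ ^ 2) ≤
        c * (√(∫ x, ‖diracOp A B (fun y => lam * g y) f u x‖ ^ 2) + √(∫ x, ‖u x‖ ^ 2)) := by
  obtain ⟨Ch, hCh⟩ := hR.exists_abs_mul_deriv_mul_deriv_le (hg.differentiable_deriv_two)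
    (fun x => abs_nonneg (g x)) hxg' hx2g''
  obtain ⟨Cf, hCf⟩ := hR.exists_abs_mul_deriv_mul_deriv_le (hf.differentiable_deriv_two)
    (fun _ => zero_le_one) (by simpa using hxf') (by simpa using hx2f'')
  obtain ⟨K, hK⟩ := hR.exists_norm_doubleCommutatorOp_le hAB.norm_left_apply hAB.norm_right_apply
    (by simpa using hCf)
  refine ⟨√(3 * K ^ 2 * (4 * Mf ^ 2 + Cg ^ 2 + 5)) + 1, by positivity,
    fun u lam hu hu₂ hu₂' => ?_⟩
  have hmass (x : ℝ) : |lam * g x| ≤ |lam| * Cb := by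
    rw [abs_mul]
    exact mul_le_mul_of_nonneg_left (hg_bdd x) (abs_nonneg lam)
  have hmass' (x : ℝ) : |deriv (fun y => lam * g y) x| ≤ Cg * |lam * g x| := by
    rw [deriv_const_mul_field, abs_mul, abs_mul, mul_left_comm]
    exact mul_le_mul_of_nonneg_left (hg' x) (abs_nonneg lam)
  have hmass'' (x : ℝ) : |R x * deriv (fun y => R y * deriv (fun z => lam * g z) y) x| ≤
      Ch * |lam * g x| := by
    rw [deriv_mul_deriv_const_mul, mul_left_comm, abs_mul, abs_mul lam, mul_left_comm]
    exact mul_le_mul_of_nonneg_left (hCh x) (abs_nonneg lam)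
  refine (hAB.sqrt_integral_norm_sq_le_of_norm_le ((hg.differentiable two_ne_zero).const_mul lam)
    hmass hmass' hf.continuous.aestronglyMeasurable hf_bdd hu hu₂ hu₂'
    (hK _ hmass'' u)).trans ?_
  gcongr
  exact le_add_of_nonneg_right zero_le_one

theorem memLp_deriv_schwartzMap {F : Type*} [NormedAddCommGroup F] [NormedSpace ℝ F]
    (u : SchwartzMap ℝ F) (p : ENNReal) : MemLp (deriv u) p := by
  rw [← funext (SchwartzMap.derivCLM_apply ℝ u)]
  exact (SchwartzMap.derivCLM ℝ F u).memLp p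

theorem isSymmetric_Mop {Γ : Matrix (Fin 4) (Fin 4) ℂ} (hΓ : Γ.IsHermitian) :
    (Mop Γ : V4 →ₗ[ℂ] V4).IsSymmetric :=
  Matrix.isSymmetric_toEuclideanLin_iff.2 hΓ

theorem isCliffordPair_Mop {Γ1 Γ2 : Matrix (Fin 4) (Fin 4) ℂ} (hΓ1 : Γ1.IsHermitian)
    (hΓ2 : Γ2.IsHermitian) (hΓ1_sq : Γ1 * Γ1 = 1) (hΓ2_sq : Γ2 * Γ2 = 1)
    (hanticomm : Γ1 * Γ2 + Γ2 * Γ1 = 0) : IsCliffordPair (Mop Γ1) (Mop Γ2) where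
  isSymmetric_left := isSymmetric_Mop hΓ1
  isSymmetric_right := isSymmetric_Mop hΓ2
  mul_self_left := by rw [Mop, ← map_mul, hΓ1_sq, map_one]
  mul_self_right := by rw [Mop, ← map_mul, hΓ2_sq, map_one]
  anticomm := by rw [Mop, Mop, ← map_mul, ← map_mul, ← map_add, hanticomm, map_zero]

theorem isHorizonCutoff_Rm {jm : ℝ → ℝ} {S : ℝ} (hS : 1 ≤ S) (hjm : ContDiff ℝ 3 jm)
    (hjm_one : ∀ t ≤ -2, jm t = 1) (hjm_zero : ∀ t, -(3 / 2 : ℝ) ≤ t → jm t = 0) :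
    IsHorizonCutoff (Rm jm S) where
  contDiff := ((hjm.comp (contDiff_id.div_const S)).pow 2).mul contDiff_id
  exists_eq_self := by
    refine ⟨-2 * S, fun x hx => ?_⟩
    rw [Rm, hjm_one _ ((div_le_iff₀ (by positivity)).2 hx), one_pow, one_mul]
  eq_zero x hx := by
    have hxS : -(3 / 2) ≤ x / S := (le_div_iff₀ (by positivity)).2 (by linarith)
    rw [Rm, hjm_zero _ hxS, zero_pow two_ne_zero, zero_mul]

theorem H0op_eq_diracOp (Γ1 Γ2 : Matrix (Fin 4) (Fin 4) ℂ) (g f : ℝ → ℝ) (lam : ℝ) (u : ℝ → V4) :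
    H0op Γ1 Γ2 g f lam u = diracOp (Mop Γ1) (Mop Γ2) (fun x => lam * g x) f u :=
  rfl

theorem DcommOp_eq_doubleCommutatorOp (Γ1 Γ2 : Matrix (Fin 4) (Fin 4) ℂ) (g f : ℝ → ℝ) (lam : ℝ)
    (jm : ℝ → ℝ) (S : ℝ) (u : ℝ → V4) :
    DcommOp Γ1 Γ2 g f lam jm S u =
      doubleCommutatorOp (Mop Γ1) (Mop Γ2) (fun x => lam * g x) f (Rm jm S) u := by
  funext x
  simp only [DcommOp, doubleCommutatorOp, deriv_mul_deriv_const_mul, Dop]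

/-- the double commutator `[A₋, [A₋, H₀]] = iT` is bounded by the graph norm
of `H₀`, uniformly in `λ ≥ 1`: under the decay assumptions on `g`, `g''`, `f'`, `f''` on
`(−∞, −3/2]`, there is `c > 0` with `‖Tu‖ ≤ c(‖H₀u‖ + ‖u‖)` for every Schwartz `u`. -/
theorem double_commutator_H0_Aminus_bounded
    (Γ1 Γ2 : Matrix (Fin 4) (Fin 4) ℂ)
    (hΓ1_herm : Γ1.IsHermitian) (hΓ2_herm : Γ2.IsHermitian)
    (hΓ1_sq : Γ1 * Γ1 = 1) (hΓ2_sq : Γ2 * Γ2 = 1)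
    (hanticomm : Γ1 * Γ2 + Γ2 * Γ1 = 0)
    (g : ℝ → ℝ) (hg_smooth : ContDiff ℝ (⊤ : ℕ∞) g) (Cb : ℝ) (hg_bdd : ∀ x : ℝ, |g x| ≤ Cb)
    (Cg : ℝ) (hCg : 0 < Cg) (hg' : ∀ x : ℝ, |deriv g x| ≤ Cg * |g x|)
    (f : ℝ → ℝ) (hf_smooth : ContDiff ℝ (⊤ : ℕ∞) f)
    (Mf : ℝ) (hf_bdd : ∀ x : ℝ, |f x| ≤ Mf)
    (Mf' : ℝ) (hf'_bdd : ∀ x : ℝ, |deriv f x| ≤ Mf')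
    (S : ℝ) (hS : 1 ≤ S)
    (jm : ℝ → ℝ) (hjm_smooth : ContDiff ℝ (⊤ : ℕ∞) jm)
    (hjm_range : ∀ t : ℝ, jm t ∈ Set.Icc (0 : ℝ) 1)
    (hjm_one : ∀ t : ℝ, t ≤ -2 → jm t = 1)
    (hjm_zero : ∀ t : ℝ, -(3 / 2 : ℝ) ≤ t → jm t = 0)
    (C2 : ℝ) (hC2 : 0 < C2)
    (hxg' : ∀ x : ℝ, x ≤ -(3 / 2 : ℝ) → |x * deriv g x| ≤ C2 * |g x|)
    (C4 : ℝ) (hC4 : 0 < C4)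
    (hx2g'' : ∀ x : ℝ, x ≤ -(3 / 2 : ℝ) → |x ^ 2 * deriv (deriv g) x| ≤ C4 * |g x|)
    (C3 : ℝ) (hC3 : 0 < C3)
    (hxf' : ∀ x : ℝ, x ≤ -(3 / 2 : ℝ) → |x * deriv f x| ≤ C3)
    (C5 : ℝ) (hC5 : 0 < C5)
    (hx2f'' : ∀ x : ℝ, x ≤ -(3 / 2 : ℝ) → |x ^ 2 * deriv (deriv f) x| ≤ C5) :
    ∃ c : ℝ, 0 < c ∧ ∀ (u : SchwartzMap ℝ V4) (lam : ℝ), 1 ≤ lam →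
      L2norm (DcommOp Γ1 Γ2 g f lam jm S ⇑u) ≤
        c * (L2norm (H0op Γ1 Γ2 g f lam ⇑u) + L2norm ⇑u) := by
  obtain ⟨c, hc, hbound⟩ := double_commutator_H0_Aminus_bounded_general
    (isCliffordPair_Mop hΓ1_herm hΓ2_herm hΓ1_sq hΓ2_sq hanticomm)
    (contDiff_infty.1 hg_smooth 2) hg_bdd hg' (contDiff_infty.1 hf_smooth 2) hf_bdd
    (isHorizonCutoff_Rm hS (contDiff_infty.1 hjm_smooth 3) hjm_one hjm_zero)
    hxg' hx2g'' hxf' hx2f''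
  refine ⟨c, hc, fun u lam _ => ?_⟩
  rw [H0op_eq_diracOp, DcommOp_eq_doubleCommutatorOp]
  exact hbound u lam u.differentiable (u.memLp 2) (memLp_deriv_schwartzMap u 2)
end
end
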